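/- The assignment (v⊗w, v'⊗w') ↦ ½·Tr_{E/F}((v, v')·conj(⟨w, w'⟩)) is a well-defined F-bilinear form ⟨⟨ , ⟩⟩ on 𝕎 = V ⊗_E W viewed as an F-vector space, and (𝕎, ⟨⟨ , ⟩⟩) is a symplectic F-space: ⟨⟨ , ⟩⟩ is alternating and nondegenerate, and dim_F 𝕎 = 2mn. -/

import Mathlib

open scoped TensorProduct

theorem aux_sesq
    {E : Type*} [Field E] (τ : E →+* E)
    {V : Type*} [AddCommGroup V] [Module E V]
    (BV : V → V → E)
    (hV1 : ∀ v₁ v₂ v, BV (v₁ + v₂) v = BV v₁ v + BV v₂ v)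
    (hV2 : ∀ (c : E) (v v' : V), BV (c • v) v' = c * BV v v')
    (hV3 : ∀ v v₁ v₂, BV v (v₁ + v₂) = BV v v₁ + BV v v₂)
    (hV4 : ∀ (c : E) (v v' : V), BV v (c • v') = τ c * BV v v')
    {W : Type*} [AddCommGroup W] [Module E W]
    (BW : W → W → E)
    (hW1 : ∀ w₁ w₂ w, BW (w₁ + w₂) w = BW w₁ w + BW w₂ w)
    (hW2 : ∀ (c : E) (w w' : W), BW (c • w) w' = τ c * BW w w')
    (hW3 : ∀ w w₁ w₂, BW w (w₁ + w₂) = BW w w₁ + BW w w₂)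
    (hW4 : ∀ (c : E) (w w' : W), BW w (c • w') = c * BW w w') :
    ∃ L : (V ⊗[E] W) →ₛₗ[τ] ((V ⊗[E] W) →ₗ[E] E),
      ∀ v w v' w', L (v ⊗ₜ[E] w) (v' ⊗ₜ[E] w') = BV v' v * BW w w' := by
  let L0 : V → W → ((V ⊗[E] W) →ₗ[E] E) := fun v w =>
    TensorProduct.lift (LinearMap.mk₂ E (fun v' w' => BV v' v * BW w w')
      (fun a b c => by rw [hV1]; ring)
      (fun a b c => by rw [hV2, smul_eq_mul]; ring)
      (fun a b c => by rw [hW3]; ring)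
      (fun a b c => by rw [hW4, smul_eq_mul]; ring))
  have hL0 : ∀ v w v' w', L0 v w (v' ⊗ₜ[E] w') = BV v' v * BW w w' := fun v w v' w' => by
    simp [L0]
  refine ⟨TensorProduct.lift (LinearMap.mk₂'ₛₗ τ τ L0 ?_ ?_ ?_ ?_), ?_⟩
  · intro a b c
    refine TensorProduct.ext' fun x y => ?_
    simp only [LinearMap.add_apply, hL0, hV3]; ring
  · intro a b c
    refine TensorProduct.ext' fun x y => ?_
    simp only [LinearMap.smul_apply, hL0, hV4, smul_eq_mul]; ring
  · intro a b c
    refine TensorProduct.ext' fun x y => ?_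
    simp only [LinearMap.add_apply, hL0, hW1]; ring
  · intro a b c
    refine TensorProduct.ext' fun x y => ?_
    simp only [LinearMap.smul_apply, hL0, hW2, smul_eq_mul]; ring
  · intro v w v' w'
    simp [hL0]

theorem aux_trace {F E : Type*} [Field F] [Field E] [Algebra F E]
    (hquad : Module.finrank F E = 2) (σ : E ≃ₐ[F] E) (hne : ∃ x : E, σ x ≠ x) (x : E) :
    algebraMap F E (Algebra.trace F E x) = x + σ x := by
  classical
  have : FiniteDimensional F E := FiniteDimensional.of_finrank_pos (by omega)
  have h1 : (1 : E ≃ₐ[F] E) ≠ σ := by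
    rintro rfl
    obtain ⟨y, hy⟩ := hne
    exact hy rfl
  have hle : Fintype.card (E ≃ₐ[F] E) ≤ 2 := hquad ▸ AlgEquiv.card_le
  have huniv : ({1, σ} : Finset (E ≃ₐ[F] E)) = Finset.univ := by
    apply Finset.eq_univ_of_card
    have := Finset.card_le_univ ({1, σ} : Finset (E ≃ₐ[F] E))
    rw [Finset.card_pair h1] at *
    omega
  have hG : IsGalois F E := by
    apply IsGalois.of_card_aut_eq_finrank
    rw [hquad, Nat.card_eq_fintype_card, ← Finset.card_univ, ← huniv, Finset.card_pair h1]
  rw [trace_eq_sum_automorphisms, ← huniv, Finset.sum_pair h1]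
  rfl

/- STATEMENT 2:
The assignment (v⊗w, v'⊗w') ↦ ½·Tr_{E/F}((v, v')·conj(⟨w, w'⟩)) is a well-defined
F-bilinear form ⟨⟨ , ⟩⟩ on 𝕎 = V ⊗_E W viewed as an F-vector space, and (𝕎, ⟨⟨ , ⟩⟩)
is a symplectic F-space: ⟨⟨ , ⟩⟩ is alternating and nondegenerate, and dim_F 𝕎 = 2mn.

Here Tr_{E/F}(x) = x + σ x, so the defining property of B on pure tensors is expressed
(inside E, via the injective algebra map F → E) as
  algebraMap F E (2 * B (v ⊗ w) (v' ⊗ w')) = x + σ x  with  x = BV v v' * σ (BW w w'). -/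
theorem stmt_2
    (p : ℕ) [Fact p.Prime]
    (F : Type*) [Field F] [Algebra ℚ_[p] F] [FiniteDimensional ℚ_[p] F]
    (E : Type*) [Field E] [Algebra F E] (hquad : Module.finrank F E = 2)
    (σ : E ≃ₐ[F] E) (hinv : ∀ x, σ (σ x) = x) (hne : ∃ x : E, σ x ≠ x)
    (V : Type*) [AddCommGroup V] [Module E V] [Module F V] [IsScalarTower F E V]
    [FiniteDimensional E V] (hm : 1 ≤ Module.finrank E V)
    (BV : V → V → E)
    (hVadd : ∀ v₁ v₂ v, BV (v₁ + v₂) v = BV v₁ v + BV v₂ v)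
    (hVsmul : ∀ (c : E) (v v' : V), BV (c • v) v' = c * BV v v')
    (hVherm : ∀ v v', BV v' v = σ (BV v v'))
    (hVnd : ∀ v, (∀ v', BV v v' = 0) → v = 0)
    (W : Type*) [AddCommGroup W] [Module E W] [FiniteDimensional E W]
    (hn : 1 ≤ Module.finrank E W)
    (BW : W → W → E)
    (hWadd : ∀ w w₁ w₂, BW w (w₁ + w₂) = BW w w₁ + BW w w₂)
    (hWsmul : ∀ (c : E) (w w' : W), BW w (c • w') = c * BW w w')
    (hWskew : ∀ w w', BW w' w = -σ (BW w w'))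
    (hWnd : ∀ w, (∀ w', BW w w' = 0) → w = 0) :
    ∃ B : (V ⊗[E] W) →ₗ[F] (V ⊗[E] W) →ₗ[F] F,
      -- B is the form ½·Tr_{E/F}((v, v')·conj(⟨w, w'⟩)) on pure tensors
      (∀ (v v' : V) (w w' : W),
        algebraMap F E (2 * B (v ⊗ₜ[E] w) (v' ⊗ₜ[E] w'))
          = BV v v' * σ (BW w w') + σ (BV v v' * σ (BW w w'))) ∧
      -- B is alternating
      (∀ u : V ⊗[E] W, B u u = 0) ∧
      -- B is nondegenerate
      (∀ u : V ⊗[E] W, (∀ u', B u u' = 0) → u = 0) ∧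
      -- dim_F 𝕎 = 2mn
      Module.finrank F (V ⊗[E] W)
        = 2 * Module.finrank E V * Module.finrank E W := by
  classical
  have hcF : CharZero F := charZero_of_injective_algebraMap (algebraMap ℚ_[p] F).injective
  have hfd : FiniteDimensional F E := FiniteDimensional.of_finrank_pos (by omega)
  have hinj : Function.Injective (algebraMap F E) := (algebraMap F E).injective
  have htr := aux_trace hquad σ hne
  have hV3 : ∀ v v₁ v₂, BV v (v₁ + v₂) = BV v v₁ + BV v v₂ := fun v v₁ v₂ => by
    rw [hVherm (v₁ + v₂), hVadd, map_add, ← hVherm, ← hVherm]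
  have hV4 : ∀ (c : E) (v v' : V), BV v (c • v') = σ c * BV v v' := fun c v v' => by
    rw [hVherm (c • v'), hVsmul, map_mul, ← hVherm]
  have hW1 : ∀ w₁ w₂ w, BW (w₁ + w₂) w = BW w₁ w + BW w₂ w := fun w₁ w₂ w => by
    rw [hWskew w, hWadd, map_add, hWskew w w₁, hWskew w w₂]; ring
  have hW2 : ∀ (c : E) (w w' : W), BW (c • w) w' = σ c * BW w w' := fun c w w' => by
    rw [hWskew w', hWsmul, map_mul, hWskew w' w]; ring
  obtain ⟨L, hL⟩ := aux_sesq (σ : E →+* E) BV hVadd hVsmul hV3 hV4 BW hW1 hW2 hWadd hWsmul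
  -- skew-hermitian
  have hskew : ∀ u u', L u' u = -σ (L u u') := by
    intro u u'
    induction u with
    | zero => simp
    | add a b ha hb => simp only [map_add, LinearMap.add_apply, ha, hb]; ring
    | tmul v w =>
      induction u' with
      | zero => simp
      | add a b ha hb => simp only [map_add, LinearMap.add_apply, ha, hb]; ring
      | tmul v' w' =>
        rw [hL, hL, hVherm v' v, hWskew w w', map_mul]; ring
  -- nondegeneracy of the sesquilinear form
  have hLnd : ∀ u, (∀ u', L u u' = 0) → u = 0 := by
    intro u hu
    let b := Module.finBasis E V
    obtain ⟨c, rfl⟩ := TensorProduct.eq_repr_basis_left b u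
    have key : ∀ w', (c.support.sum fun i => σ (BW (c i) w') • b i) = 0 := by
      intro w'
      refine hVnd _ fun v' => ?_
      rw [hVherm v', map_eq_zero_iff σ σ.injective]
      have hadd : ∀ (s : Finset (Fin (Module.finrank E V))) (f : _ → V),
          BV v' (s.sum f) = s.sum fun i => BV v' (f i) := fun s f =>
        map_sum (AddMonoidHom.mk' (BV v') (hV3 v')) f s
      rw [hadd]
      have := hu (v' ⊗ₜ[E] w')
      rw [Finsupp.sum, map_sum, LinearMap.sum_apply] at this
      rw [← this]
      refine Finset.sum_congr rfl fun i _ => ?_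
      rw [hL, hV4, hinv, mul_comm]
    have hc : c = 0 := by
      ext i
      refine hWnd _ fun w' => ?_
      by_cases hi : i ∈ c.support
      · have := linearIndependent_iff'.1 b.linearIndependent _ _ (key w') i hi
        exact (map_eq_zero_iff σ σ.injective).1 this
      · rw [Finsupp.notMem_support_iff.1 hi]
        have := hW2 0 0 w'
        simpa using this
    simp [hc]
  have hσF : ∀ (r : F) (u u' : V ⊗[E] W), L (r • u) u' = algebraMap F E r * L u u' := by
    intro r u u'
    rw [← algebraMap_smul E r u, LinearMap.map_smulₛₗ]
    simp [Algebra.smul_def]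
  let B : (V ⊗[E] W) →ₗ[F] (V ⊗[E] W) →ₗ[F] F :=
    LinearMap.mk₂ F (fun u u' => (2 : F)⁻¹ * Algebra.trace F E (L u u'))
      (fun a b c => by simp only [map_add, LinearMap.add_apply]; ring)
      (fun r a b => by
        simp only [hσF, ← Algebra.smul_def, map_smul, smul_eq_mul]; ring)
      (fun a b c => by simp only [map_add]; ring)
      (fun r a b => by
        rw [← algebraMap_smul E r b, map_smul, algebraMap_smul, map_smul, smul_eq_mul, smul_eq_mul]
        ring)
  have hB : ∀ u u', B u u' = (2 : F)⁻¹ * Algebra.trace F E (L u u') := fun u u' => rfl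
  have hB2 : ∀ u u', algebraMap F E (2 * B u u') = L u u' + σ (L u u') := fun u u' => by
    rw [hB, mul_inv_cancel_left₀ two_ne_zero, htr]
  refine ⟨B, ?_, ?_, ?_, ?_⟩
  · intro v v' w w'
    rw [hB2, hL, map_mul, map_mul, ← hVherm, hinv, hVherm v v', add_comm]
  · intro u
    have h := hB2 u u
    have h' := hskew u u
    have h0 : L u u + σ (L u u) = 0 := by
      nth_rewrite 1 [h']
      ring
    rw [h0, map_eq_zero_iff _ hinj] at h
    simpa using h
  · intro u hu
    refine hLnd u fun u' => ?_
    by_contra hx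
    have h := hB2 u ((L u u')⁻¹ • u')
    rw [hu, map_smul, smul_eq_mul, inv_mul_cancel₀ hx, map_one, mul_zero, map_zero] at h
    have h2 : algebraMap F E 2 = 0 := by
      rw [map_ofNat, h]; norm_num
    rw [map_eq_zero_iff _ hinj] at h2
    exact two_ne_zero h2
  · rw [← Module.finrank_mul_finrank F E (V ⊗[E] W), hquad, Module.finrank_tensorProduct, mul_assoc]
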